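/- Let C ⊆ ℝⁿ be a nonempty closed semi-algebraic set and let ν be a semi-algebraic norm on ℝⁿ such that both ν and its dual norm ν* are (Fréchet) differentiable at every point other than the origin. Then the set S(C) of all points x ∈ ℝⁿ for which the best ν-approximation of x in C is not unique is a nowhere dense semi-algebraic set; in particular, S(C) is contained in the zero set of some nonzero polynomial in n real variables. -/

import Mathlib

/-- A subset of `ℝⁿ` is semi-algebraic if it is a finite union of sets of the form
`{x : P₁(x) > 0, …, P_λ(x) > 0, Q(x) = 0}` with `P₁, …, P_λ, Q` real polynomials. -/
def IsSemialgebraic {n : ℕ} (S : Set (Fin n → ℝ)) : Prop :=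
  ∃ (N : ℕ) (T : Fin N → Set (Fin n → ℝ)),
    (∀ k, ∃ (m : ℕ) (P : Fin m → MvPolynomial (Fin n) ℝ) (Q : MvPolynomial (Fin n) ℝ),
      T k = {x | (∀ i, 0 < MvPolynomial.eval x (P i)) ∧ MvPolynomial.eval x Q = 0}) ∧
    S = ⋃ k, T k

/-- A function `f : ℝⁿ → ℝ` is semi-algebraic if its graph is a semi-algebraic subset
of `ℝ^(n+1)`. -/
def IsSemialgebraicFn {n : ℕ} (f : (Fin n → ℝ) → ℝ) : Prop :=
  IsSemialgebraic {z : Fin (n + 1) → ℝ | ∃ x : Fin n → ℝ, z = Fin.snoc x (f x)}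

/-- The distance from `x` to the set `C` measured in the norm `ν`. -/
noncomputable def distNu {E : Type*} [AddCommGroup E] (ν : E → ℝ) (C : Set E) (x : E) : ℝ :=
  sInf ((fun y => ν (x - y)) '' C)

/-- The dual norm `ν*(x) = max { yᵀ x : ν(y) ≤ 1 }`. -/
noncomputable def dualNu {n : ℕ} (ν : (Fin n → ℝ) → ℝ) (x : Fin n → ℝ) : ℝ :=
  sSup ((fun y => ∑ i, y i * x i) '' {y | ν y ≤ 1})

open Polynomial in
theorem sa_sign_const (q : ℝ[X]) (a b s t : ℝ) (hs : s ∈ Set.Ioo a b) (ht : t ∈ Set.Ioo a b)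
    (h : q = 0 ∨ ∀ r ∈ Set.Ioo a b, q.eval r ≠ 0) :
    SignType.sign (q.eval s) = SignType.sign (q.eval t) := by
  rcases h with rfl | h
  · simp
  have hpc : IsPreconnected (Set.Ioo a b) := isPreconnected_Ioo
  have key : ∀ s ∈ Set.Ioo a b, ∀ t ∈ Set.Ioo a b, q.eval s < 0 → 0 < q.eval t → False := by
    intro s hs t ht h1 h2
    obtain ⟨r, hr, hr0⟩ := hpc.intermediate_value hs ht q.continuous.continuousOn ⟨h1.le, h2.le⟩
    exact h r hr hr0
  rcases lt_or_gt_of_ne (h s hs) with h1 | h1 <;> rcases lt_or_gt_of_ne (h t ht) with h2 | h2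
  · rw [sign_neg h1, sign_neg h2]
  · exact (key s hs t ht h1 h2).elim
  · exact (key t ht s hs h2 h1).elim
  · rw [sign_pos h1, sign_pos h2]

open Polynomial in
theorem sa_mono_opp (p : ℝ[X]) (a b y : ℝ) (hy : y ∈ Set.Ioo a b)
    (h : ∀ r ∈ Set.Ioo a b, p.derivative.eval r ≠ 0) (hp : p.eval y = 0) :
    p.eval a * p.eval b < 0 := by
  obtain ⟨c, hc, hc'⟩ := exists_deriv_eq_slope (fun x => p.eval x) hy.1 p.continuous.continuousOn
    p.differentiable.differentiableOn
  obtain ⟨d, hd, hd'⟩ := exists_deriv_eq_slope (fun x => p.eval x) hy.2 p.continuous.continuousOn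
    p.differentiable.differentiableOn
  rw [Polynomial.deriv] at hc' hd'
  have hcI : c ∈ Set.Ioo a b := ⟨hc.1, hc.2.trans hy.2⟩
  have hdI : d ∈ Set.Ioo a b := ⟨hy.1.trans hd.1, hd.2⟩
  have hs := sa_sign_const p.derivative a b c d hcI hdI (Or.inr h)
  have h1 : 0 < y - a := sub_pos.2 hy.1
  have h2 : 0 < b - y := sub_pos.2 hy.2
  have ea : p.eval a = - (p.derivative.eval c * (y - a)) := by
    rw [hc']; field_simp; rw [hp]; ring
  have eb : p.eval b = p.derivative.eval d * (b - y) := by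
    rw [hd']; field_simp; rw [hp]; ring
  have hpos : 0 < p.derivative.eval c * p.derivative.eval d := by
    rcases lt_or_gt_of_ne (h c hcI) with h3 | h3
    · rw [sign_neg h3] at hs
      exact mul_pos_of_neg_of_neg h3 (sign_eq_neg_one_iff.1 hs.symm)
    · rw [sign_pos h3] at hs
      exact mul_pos h3 (sign_eq_one_iff.1 hs.symm)
  rw [ea, eb]
  have := mul_pos hpos (mul_pos h1 h2)
  nlinarith

theorem sa_gap (Z : Set ℝ) (hZ : Z.Finite) (l u y : ℝ) (hl : l < y) (hu : y < u) (hy : y ∉ Z) :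
    ∃ a b, (a = l ∨ a ∈ Z) ∧ (b = u ∨ b ∈ Z) ∧ l ≤ a ∧ a < y ∧ y < b ∧ b ≤ u ∧
      ∀ t ∈ Z, ¬ (a < t ∧ t < b) := by
  classical
  set F := hZ.toFinset with hF
  obtain ⟨a, ha, ha'⟩ := Finset.exists_max_image ((insert l F).filter (· < y)) id
    ⟨l, by simp [hl]⟩
  obtain ⟨b, hb, hb'⟩ := Finset.exists_min_image ((insert u F).filter (y < ·)) id
    ⟨u, by simp [hu]⟩
  simp only [Finset.mem_filter, Finset.mem_insert, hF, Set.Finite.mem_toFinset, id] at ha ha' hb hb'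
  refine ⟨a, b, ha.1, hb.1, ha' l ⟨Or.inl rfl, hl⟩, ha.2, hb.2, hb' u ⟨Or.inl rfl, hu⟩, ?_⟩
  rintro t ht ⟨h1, h2⟩
  rcases lt_trichotomy t y with h | h | h
  · exact absurd (ha' t ⟨Or.inr ht, h⟩) (not_le.2 h1)
  · exact hy (h ▸ ht)
  · exact absurd (hb' t ⟨Or.inr ht, h⟩) (not_le.2 h2)

open Polynomial Filter in
theorem sa_sign_atTop (p : ℝ[X]) :
    ∀ᶠ M in atTop, SignType.sign (p.eval M) = SignType.sign p.leadingCoeff := by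
  have h := (Polynomial.isEquivalent_atTop_lead p).symm
  rcases eq_or_ne p 0 with rfl | hp
  · simp
  obtain ⟨w, hw, hw'⟩ := (Polynomial.isEquivalent_atTop_lead p).exists_eq_mul
  filter_upwards [hw', hw.eventually (lt_mem_nhds zero_lt_one), eventually_gt_atTop 0] with M h1 h2 h3
  rw [h1]
  simp only [Pi.mul_apply, sign_mul, sign_pos h2, sign_pow, sign_pos h3]
  simp

/-- Sign-invariant (semi-algebraic) sets relative to a ring of functions. -/
def SA {Ω R : Type} [CommRing R] (φ : Ω → R →+* ℝ) (A : Set Ω) : Prop :=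
  ∃ F : Finset R, ∀ x x', (∀ f ∈ F, SignType.sign (φ x f) = SignType.sign (φ x' f)) →
    x ∈ A → x' ∈ A

/-- Adjoin one real variable. -/
noncomputable def ext1 {Ω R : Type} [CommRing R] (φ : Ω → R →+* ℝ) :
    Ω × ℝ → Polynomial R →+* ℝ := fun z => Polynomial.eval₂RingHom (φ z.1) z.2

section
set_option linter.unusedSectionVars false
open Polynomial Filter
variable {Ω R Ω' R' : Type} [CommRing R] [CommRing R'] [Algebra ℝ R] {φ : Ω → R →+* ℝ} {φ' : Ω' → R' →+* ℝ}

theorem ext1_apply (x : Ω) (y : ℝ) (p : R[X]) :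
    ext1 φ (x, y) p = (p.map (φ x)).eval y := by
  simp [ext1, eval_map]

theorem SA.compl {A : Set Ω} (h : SA φ A) : SA φ Aᶜ := by
  obtain ⟨F, hF⟩ := h
  exact ⟨F, fun x x' hx hA hA' => hA (hF x' x (fun f hf => (hx f hf).symm) hA')⟩

theorem SA.inter {A B : Set Ω} (h : SA φ A) (h' : SA φ B) : SA φ (A ∩ B) := by
  classical
  obtain ⟨F, hF⟩ := h
  obtain ⟨G, hG⟩ := h'
  exact ⟨F ∪ G, fun x x' hx hA => ⟨hF x x' (fun f hf => hx f (Finset.mem_union_left _ hf)) hA.1,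
    hG x x' (fun f hf => hx f (Finset.mem_union_right _ hf)) hA.2⟩⟩

theorem SA.union {A B : Set Ω} (h : SA φ A) (h' : SA φ B) : SA φ (A ∪ B) := by
  have := (h.compl.inter h'.compl).compl
  rwa [Set.compl_inter, compl_compl, compl_compl] at this

theorem SA.empty : SA φ (∅ : Set Ω) := ⟨∅, fun _ _ _ h => h⟩

theorem SA.biUnion {ι : Type*} (s : Finset ι) {A : ι → Set Ω} (h : ∀ i ∈ s, SA φ (A i)) :
    SA φ {x | ∃ i ∈ s, x ∈ A i} := by
  classical
  induction s using Finset.induction_on with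
  | empty => simpa using SA.empty
  | insert a s ha ih =>
    have h1 := (h a (Finset.mem_insert_self _ _)).union
      (ih fun i hi => h i (Finset.mem_insert_of_mem hi))
    convert h1 using 1
    ext x; simp

theorem SA.sgn (f : R) (s : SignType) : SA φ {x | SignType.sign (φ x f) = s} :=
  ⟨{f}, fun x x' h hx => by
    have := h f (by simp)
    simp only [Set.mem_ofPred_eq] at hx ⊢
    rw [← this, hx]⟩

theorem SA.pos (f : R) : SA φ {x | 0 < φ x f} := by
  simpa [sign_eq_one_iff] using SA.sgn (φ := φ) f 1

theorem SA.neg (f : R) : SA φ {x | φ x f < 0} := by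
  simpa [sign_eq_neg_one_iff] using SA.sgn (φ := φ) f (-1)

theorem SA.zero (f : R) : SA φ {x | φ x f = 0} := by
  simpa [sign_eq_zero_iff] using SA.sgn (φ := φ) f 0

theorem map_algR (f : R →+* ℝ) (c : ℝ) : f (algebraMap ℝ R c) = c := by
  have : f.comp (algebraMap ℝ R) = RingHom.id ℝ := Subsingleton.elim _ _
  exact congrArg (fun g => g c) this

/-- Substitution. -/
theorem SA.subst {A : Set Ω'} (h : SA φ' A) (ψ : Ω → Ω') (r : R' →+* R)
    (hr : ∀ x f, φ' (ψ x) f = φ x (r f)) : SA φ {x | ψ x ∈ A} := by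
  classical
  obtain ⟨F, hF⟩ := h
  refine ⟨F.image r, fun x x' hx hA => hF _ _ (fun f hf => ?_) hA⟩
  rw [hr, hr]
  exact hx _ (Finset.mem_image_of_mem _ hf)

theorem SA.subst1 {A : Set (Ω × ℝ)} (h : SA (ext1 φ) A) (e : R) : SA φ {x | (x, φ x e) ∈ A} :=
  h.subst (fun x => (x, φ x e)) (evalRingHom e) (fun x f => by
    simp only [ext1, coe_eval₂RingHom, coe_evalRingHom, eval₂_hom])

theorem SA.evt {A : Set (Ω × ℝ)} (h : SA (ext1 φ) A) : SA φ {x | ∀ᶠ M in atTop, (x, M) ∈ A} := by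
  classical
  obtain ⟨F, hF⟩ := h
  refine ⟨F.biUnion fun f => (Finset.range (f.natDegree + 1)).image f.coeff, fun x x' hx hA => ?_⟩
  have hs : ∀ f ∈ F, SignType.sign (f.map (φ x)).leadingCoeff =
      SignType.sign (f.map (φ x')).leadingCoeff := by
    intro f hf
    have hc : ∀ k, SignType.sign ((f.map (φ x)).coeff k) = SignType.sign ((f.map (φ x')).coeff k) := by
      intro k
      rw [coeff_map, coeff_map]
      by_cases hk : k < f.natDegree + 1
      · apply hx
        rw [Finset.mem_biUnion]
        exact ⟨f, hf, Finset.mem_image_of_mem _ (Finset.mem_range.2 hk)⟩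
      · rw [coeff_eq_zero_of_natDegree_lt (by omega)]; simp
    have hd : (f.map (φ x)).natDegree = (f.map (φ x')).natDegree := by
      apply natDegree_eq_of_degree_eq
      have : (f.map (φ x)).support = (f.map (φ x')).support := by
        ext k
        rw [mem_support_iff, mem_support_iff, ← sign_ne_zero, hc, sign_ne_zero]
      rw [degree, degree, this]
    rw [leadingCoeff, leadingCoeff, ← hd, hc]
  have h1 : ∀ᶠ M in atTop, ∀ f ∈ F, SignType.sign ((f.map (φ x)).eval M) =
      SignType.sign ((f.map (φ x')).eval M) := by
    rw [Filter.eventually_all_finset]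
    intro f hf
    filter_upwards [sa_sign_atTop (f.map (φ x)), sa_sign_atTop (f.map (φ x'))] with M h1 h2
    rw [h1, h2, hs f hf]
  simp only [Set.mem_ofPred_eq] at hA ⊢
  filter_upwards [hA, h1] with M h2 h3
  refine hF _ _ (fun f hf => ?_) h2
  rw [ext1_apply, ext1_apply]
  exact h3 f hf

/-- Roots of the specialisation of `p`, when it is nonzero. -/
def rt (φ : Ω → R →+* ℝ) (p : R[X]) : Set (Ω × ℝ) :=
  {z | p.map (φ z.1) ≠ 0 ∧ (p.map (φ z.1)).eval z.2 = 0}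

theorem SA.eval_pos (p : R[X]) : SA (ext1 φ) {z | 0 < (p.map (φ z.1)).eval z.2} := by
  have := SA.pos (φ := ext1 φ) p
  simpa only [← ext1_apply] using this

theorem SA.eval_zero (p : R[X]) : SA (ext1 φ) {z | (p.map (φ z.1)).eval z.2 = 0} := by
  have := SA.zero (φ := ext1 φ) p
  simpa only [← ext1_apply] using this

theorem SA.lift {A : Set Ω} (h : SA φ A) : SA (ext1 φ) {z | z.1 ∈ A} :=
  h.subst (φ := ext1 φ) (fun z => z.1) C (fun z f => by simp [ext1])

theorem SA.map_ne (p : R[X]) : SA φ {x | p.map (φ x) ≠ 0} := by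
  have h := SA.biUnion (φ := φ) (Finset.range (p.natDegree + 1)) (A := fun k => {x | φ x (p.coeff k) = 0}ᶜ)
    (fun k _ => (SA.zero _).compl)
  convert h using 1
  ext x
  simp only [Set.mem_ofPred_eq, Set.mem_compl_iff]
  rw [Ne, Polynomial.ext_iff]
  push Not
  constructor
  · rintro ⟨k, hk⟩
    rw [coeff_map, coeff_zero] at hk
    refine ⟨k, Finset.mem_range.2 ?_, hk⟩
    by_contra hc
    rw [coeff_eq_zero_of_natDegree_lt (by omega)] at hk
    simp at hk
  · rintro ⟨k, _, hk⟩
    exact ⟨k, by rwa [coeff_map, coeff_zero]⟩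

theorem SA.rt (p : R[X]) : SA (ext1 φ) (rt φ p) :=
  (SA.map_ne p).lift.inter (SA.eval_zero p)

/-- Elimination of a quantifier ranging over the roots of polynomials of degree at most `d`. -/
def ElimRoot (d : ℕ) : Prop :=
  ∀ (Ω R : Type) [CommRing R] [Algebra ℝ R] (φ : Ω → R →+* ℝ) (p : R[X]), p.natDegree ≤ d →
    ∀ A, SA (ext1 φ) A → SA φ {x | ∃ y, (x, y) ∈ rt φ p ∧ (x, y) ∈ A}

theorem exRoots {d : ℕ} (hE : ElimRoot d) (G : Finset R[X]) (hG : ∀ g ∈ G, g.natDegree ≤ d)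
    {A : Set (Ω × ℝ)} (hA : SA (ext1 φ) A) :
    SA φ {x | ∃ y, (∃ g ∈ G, (x, y) ∈ _root_.rt φ g) ∧ (x, y) ∈ A} := by
  have h := SA.biUnion (φ := φ) G (fun g hg => hE Ω R φ g (hG g hg) A hA)
  convert h using 1
  ext x
  simp only [Set.mem_ofPred_eq]
  constructor
  · rintro ⟨y, ⟨g, hg, h1⟩, h2⟩
    exact ⟨g, hg, y, h1, h2⟩
  · rintro ⟨g, hg, y, h1, h2⟩
    exact ⟨y, ⟨g, hg, h1⟩, h2⟩

def Ends (φ : Ω → R →+* ℝ) (G : Finset R[X]) (l u : R) (x : Ω) (y : ℝ) : Prop :=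
  (y = φ x l ∨ y = φ x u) ∨ ∃ g ∈ G, (x, y) ∈ _root_.rt φ g

theorem exEnds {d : ℕ} (hE : ElimRoot d) (G : Finset R[X]) (hG : ∀ g ∈ G, g.natDegree ≤ d)
    (l u : R) {A : Set (Ω × ℝ)} (hA : SA (ext1 φ) A) :
    SA φ {x | ∃ y, Ends φ G l u x y ∧ (x, y) ∈ A} := by
  have h := ((hA.subst1 l).union (hA.subst1 u)).union (exRoots hE G hG hA)
  convert h using 1
  ext x
  simp only [Set.mem_ofPred_eq, Set.mem_union, Ends]
  constructor
  · rintro ⟨y, (rfl | rfl) | h, h2⟩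
    · exact Or.inl (Or.inl h2)
    · exact Or.inl (Or.inr h2)
    · exact Or.inr ⟨y, h, h2⟩
  · rintro ((h | h) | ⟨y, h, h2⟩)
    · exact ⟨_, Or.inl (Or.inl rfl), h⟩
    · exact ⟨_, Or.inl (Or.inr rfl), h⟩
    · exact ⟨y, Or.inr h, h2⟩

theorem ext1_comp_C (z : Ω × ℝ) : (ext1 φ z).comp C = φ z.1 := by
  ext r; simp [ext1]

theorem rt_lift (g : R[X]) (z : Ω × ℝ) (y : ℝ) :
    (z, y) ∈ _root_.rt (ext1 φ) (g.map C) ↔ (z.1, y) ∈ _root_.rt φ g := by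
  simp only [_root_.rt, Set.mem_ofPred_eq, Polynomial.map_map, ext1_comp_C]

theorem rts_lift [DecidableEq R[X][X]] (G : Finset R[X]) (z : Ω × ℝ) (y : ℝ) :
    (∃ g ∈ G.image (Polynomial.map C), (z, y) ∈ _root_.rt (ext1 φ) g) ↔
      ∃ g ∈ G, (z.1, y) ∈ _root_.rt φ g := by
  simp only [Finset.exists_mem_image, rt_lift]

theorem deg_lift [DecidableEq R[X][X]] {d : ℕ} (G : Finset R[X]) (hG : ∀ g ∈ G, g.natDegree ≤ d) :
    ∀ g ∈ G.image (Polynomial.map (C : R →+* R[X])), g.natDegree ≤ d := by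
  intro g hg
  obtain ⟨f, hf, rfl⟩ := Finset.mem_image.1 hg
  exact natDegree_map_le.trans (hG f hf)

/-- forget the middle variable -/
theorem SA.lift2 {A : Set (Ω × ℝ)} (h : SA (ext1 φ) A) :
    SA (ext1 (ext1 φ)) {w | (w.1.1, w.2) ∈ A} :=
  h.subst (φ := ext1 (ext1 φ)) (fun w => (w.1.1, w.2)) (mapRingHom C) (fun w f => by
    rw [ext1_apply, ext1_apply, coe_mapRingHom, Polynomial.map_map, ext1_comp_C])

theorem keyGap {d : ℕ} (hE : ElimRoot d) (G : Finset R[X]) (hG : ∀ g ∈ G, g.natDegree ≤ d)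
    (l u : R) {B : Set ((Ω × ℝ) × ℝ)} (hB : SA (ext1 (ext1 φ)) B) :
    SA φ {x | ∃ a b, Ends φ G l u x a ∧ Ends φ G l u x b ∧ a < b ∧
      (∀ t, a < t → t < b → ¬ ∃ g ∈ G, (x, t) ∈ _root_.rt φ g) ∧ ((x, a), b) ∈ B} := by
  classical
  -- no roots in between
  have h1 : SA (ext1 (ext1 φ)) {w : (Ω × ℝ) × ℝ | ¬ ∃ t, (∃ g ∈ G, (w.1.1, t) ∈ _root_.rt φ g) ∧
      w.1.2 < t ∧ t < w.2} := by
    have hlt1 : SA (ext1 (ext1 (ext1 φ))) {v | v.1.1.2 < v.2} := by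
      have := SA.pos (φ := ext1 (ext1 (ext1 φ))) (X - C (C X))
      simpa [ext1] using this
    have hlt2 : SA (ext1 (ext1 (ext1 φ))) {v | v.2 < v.1.2} := by
      have := SA.pos (φ := ext1 (ext1 (ext1 φ))) (C X - X)
      simpa [ext1] using this
    have := (exRoots hE _ (deg_lift _ (deg_lift G hG)) (hlt1.inter hlt2)).compl
    simp only [rts_lift] at this
    exact this
  have hlt : SA (ext1 (ext1 φ)) {w : (Ω × ℝ) × ℝ | w.1.2 < w.2} := by
    have := SA.pos (φ := ext1 (ext1 φ)) (X - C X)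
    simpa [ext1] using this
  have h2 := exEnds hE _ (deg_lift G hG) (C l) (C u) ((hlt.inter h1).inter hB)
  have h3 := exEnds hE G hG l u h2
  convert h3 using 1
  ext x
  simp only [Set.mem_ofPred_eq, Ends, rts_lift, Set.mem_inter_iff]
  have hC : ∀ (a : ℝ) (r : R), ext1 φ (x, a) (C r) = φ x r := fun a r => by simp [ext1]
  simp only [hC]
  constructor
  · rintro ⟨a, b, ha, hb, hab, ht, hB⟩
    exact ⟨a, ha, b, hb, ⟨hab, fun ⟨t, hg, h1, h2⟩ => ht t h1 h2 hg⟩, hB⟩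
  · rintro ⟨a, ha, b, hb, ⟨hab, ht⟩, hB⟩
    exact ⟨a, b, ha, hb, hab, fun t h1 h2 hg => ht ⟨t, hg, h1, h2⟩, hB⟩

theorem roots_finite (φ : Ω → R →+* ℝ) (G : Finset R[X]) (x : Ω) :
    {t | ∃ g ∈ G, (x, t) ∈ _root_.rt φ g}.Finite := by
  classical
  apply (G.biUnion fun g => (g.map (φ x)).roots.toFinset).finite_toSet.subset
  rintro t ⟨g, hg, h0, h1⟩
  simp only [Finset.coe_biUnion, Set.mem_iUnion]
  refine ⟨g, hg, ?_⟩
  simp only [Finset.mem_coe, Multiset.mem_toFinset, mem_roots h0]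
  exact h1

theorem SA.mid {A : Set (Ω × ℝ)} (h : SA (ext1 φ) A) :
    SA (ext1 (ext1 φ)) {w | (w.1.1, (w.1.2 + w.2) / 2) ∈ A} := 
  h.subst (φ := ext1 (ext1 φ)) (fun w => (w.1.1, (w.1.2 + w.2) / 2)) (eval₂RingHom (C.comp C) (C (C (algebraMap ℝ R (1/2))) * (C X + X))) (fun w f => by
    induction f using Polynomial.induction_on' with
    | add p q hp hq => rw [map_add, map_add, map_add, hp, hq]
    | monomial n a => 
      have h1 : ext1 (ext1 φ) w (C (C (algebraMap ℝ R (1/2))) * (C X + X)) = (w.1.2 + w.2) / 2 := by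
        rw [map_mul, map_add]
        simp only [ext1, coe_eval₂RingHom, eval₂_C, eval₂_X, map_algR]
        ring
      have h2 : ∀ r, ext1 (ext1 φ) w (C (C r)) = φ w.1.1 r := fun r => by simp [ext1]
      rw [coe_eval₂RingHom, eval₂_monomial, map_mul, map_pow, h1, RingHom.comp_apply, h2]
      simp [ext1])

theorem invar_mid {A : Set (Ω × ℝ)} {F G : Finset R[X]} (hFG : F ⊆ G)
    (hF : ∀ x x', (∀ f ∈ F, SignType.sign (ext1 φ x f) = SignType.sign (ext1 φ x' f)) →
      x ∈ A → x' ∈ A) (x : Ω) (a b s t : ℝ) (hs : s ∈ Set.Ioo a b) (ht : t ∈ Set.Ioo a b)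
    (h : ∀ t, a < t → t < b → ¬ ∃ g ∈ G, (x, t) ∈ _root_.rt φ g) (hsA : (x, s) ∈ A) :
    (x, t) ∈ A := by
  refine hF _ _ (fun f hf => ?_) hsA
  rw [ext1_apply, ext1_apply]
  apply sa_sign_const _ a b s t hs ht
  by_cases h0 : f.map (φ x) = 0
  · exact Or.inl h0
  · exact Or.inr fun r hr hr0 => h r hr.1 hr.2 ⟨f, hFG hf, h0, hr0⟩

/-- Bounded elimination, without roots. -/
theorem bdElim (hE : ∀ d, ElimRoot d) (l u : R) {A : Set (Ω × ℝ)} (hA : SA (ext1 φ) A) :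
    SA φ {x | ∃ y, φ x l < y ∧ y < φ x u ∧ (x, y) ∈ A} := by
  classical
  obtain ⟨F, hF⟩ := id hA
  set d := F.sup natDegree with hd
  have hdeg : ∀ g ∈ F, g.natDegree ≤ d := fun g hg => Finset.le_sup (f := natDegree) hg
  have hb1 : SA (ext1 φ) {z | φ z.1 l < z.2} := by
    have := SA.pos (φ := ext1 φ) (X - C l)
    simpa [ext1] using this
  have hb2 : SA (ext1 φ) {z | z.2 < φ z.1 u} := by
    have := SA.pos (φ := ext1 φ) (C u - X)
    simpa [ext1] using this
  have h1 := exRoots (hE d) F hdeg ((hb1.inter hb2).inter hA)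
  have h2 := keyGap (hE d) F hdeg l u (((hb1.inter hb2).inter hA).mid)
  convert h1.union h2 using 1
  ext x
  simp only [Set.mem_ofPred_eq, Set.mem_union, Set.mem_inter_iff]
  constructor
  · rintro ⟨y, hl, hu, hy⟩
    by_cases hr : ∃ g ∈ F, (x, y) ∈ _root_.rt φ g
    · exact Or.inl ⟨y, hr, ⟨hl, hu⟩, hy⟩
    · right
      obtain ⟨a, b, ha, hb, hla, hay, hyb, hbu, hn⟩ := sa_gap _ (roots_finite φ F x) _ _ y hl hu hr
      have hn' : ∀ t, a < t → t < b → ¬ ∃ g ∈ F, (x, t) ∈ _root_.rt φ g :=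
        fun t h1 h2 h3 => hn t h3 ⟨h1, h2⟩
      refine ⟨a, b, ?_, ?_, hay.trans hyb, hn', ⟨?_, ?_⟩, ?_⟩
      · exact ha.elim (fun h => Or.inl (Or.inl h)) Or.inr
      · exact hb.elim (fun h => Or.inl (Or.inr h)) Or.inr
      · linarith
      · linarith
      · exact invar_mid (Finset.Subset.refl F) hF x a b y _ ⟨hay, hyb⟩
          ⟨by linarith, by linarith⟩ hn' hy
  · rintro (⟨y, -, ⟨h1, h2⟩, h3⟩ | ⟨a, b, -, -, -, -, ⟨h1, h2⟩, h3⟩)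
    · exact ⟨y, h1, h2, h3⟩
    · exact ⟨_, h1, h2, h3⟩

theorem SA.evtBdd {A : Set (Ω × ℝ)}
    (h : SA (ext1 φ) {z | ∃ y, - z.2 < y ∧ y < z.2 ∧ (z.1, y) ∈ A}) :
    SA φ {x | ∃ y, (x, y) ∈ A} := by
  convert h.evt using 1
  ext x
  simp only [Set.mem_ofPred_eq]
  constructor
  · rintro ⟨y, hy⟩
    filter_upwards [eventually_gt_atTop |y|] with M hM
    exact ⟨y, (abs_lt.1 hM).1, (abs_lt.1 hM).2, hy⟩
  · intro h
    obtain ⟨M, y, -, -, hy⟩ := h.exists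
    exact ⟨y, hy⟩

theorem SA.proj' (hE : ∀ d, ElimRoot d) {A : Set (Ω × ℝ)} (hA : SA (ext1 φ) A) :
    SA φ {x | ∃ y, (x, y) ∈ A} := by
  apply SA.evtBdd
  have := bdElim hE (-X : R[X]) X hA.lift2
  simpa [ext1] using this

theorem pseudoDiv (p : R[X]) (d : ℕ) (hp : p.natDegree ≤ d + 1) (f : R[X]) :
    ∃ (k : ℕ) (s r : R[X]), C (p.coeff (d + 1)) ^ k * f = p * s + r ∧ r.natDegree ≤ d := by
  set c := p.coeff (d + 1) with hc
  induction f using Polynomial.induction_on with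
  | C a => exact ⟨0, 0, C a, by simp, by simp⟩
  | add f g hf hg =>
    obtain ⟨k, s, r, h, hr⟩ := hf
    obtain ⟨k', s', r', h', hr'⟩ := hg
    refine ⟨k + k', C c ^ k' * s + C c ^ k * s', C (c ^ k') * r + C (c ^ k) * r', ?_, ?_⟩
    · rw [C_pow, C_pow, pow_add]
      linear_combination C c ^ k' * h + C c ^ k * h'
    · exact natDegree_add_le_of_degree_le ((natDegree_C_mul_le _ _).trans hr)
        ((natDegree_C_mul_le _ _).trans hr')
  | monomial n a ih =>
    obtain ⟨k, s, r, h, hr⟩ := ih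
    refine ⟨k + 1, C c * s * X + C (r.coeff d), C c * (r * X) - C (r.coeff d) * p, ?_, ?_⟩
    · rw [pow_succ (C c), pow_succ X]
      linear_combination C c * X * h
    · rw [natDegree_le_iff_coeff_eq_zero]
      intro N hN
      rw [coeff_sub, coeff_C_mul, coeff_C_mul]
      obtain ⟨m, rfl⟩ : ∃ m, N = m + 1 := ⟨N - 1, by omega⟩
      rw [coeff_mul_X]
      rcases eq_or_ne m d with rfl | hm
      · rw [← hc]; ring
      · rw [coeff_eq_zero_of_natDegree_lt (p := r) (by omega),
          coeff_eq_zero_of_natDegree_lt (p := p) (by omega)]; simp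

/-- Sign of `f` on the roots of `p` agrees with the sign of a polynomial of lower degree. -/
theorem redSign (φ : Ω → R →+* ℝ) (p : R[X]) (d : ℕ) (hp : p.natDegree ≤ d + 1) (f : R[X]) :
    ∃ r : R[X], r.natDegree ≤ d ∧ ∀ z, φ z.1 (p.coeff (d + 1)) ≠ 0 → ext1 φ z p = 0 →
      SignType.sign (ext1 φ z f) = SignType.sign (ext1 φ z r) := by
  obtain ⟨k, s, r, h, hr⟩ := pseudoDiv p d hp f
  refine ⟨C (p.coeff (d + 1) ^ k) * r, (natDegree_C_mul_le _ _).trans hr, fun z hz h0 => ?_⟩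
  have h1 : C (p.coeff (d+1) ^ k) * r =
      C (p.coeff (d + 1)) ^ (2 * k) * f - C (p.coeff (d + 1)) ^ k * p * s := by
    rw [C_pow, two_mul, pow_add]; linear_combination (- C (p.coeff (d + 1)) ^ k) * h
  have hC : ext1 φ z (C (p.coeff (d + 1))) = φ z.1 (p.coeff (d + 1)) := by simp [ext1]
  rw [h1, map_sub, map_mul, map_mul, map_mul, h0, map_pow, hC, pow_mul]
  have : 0 < (φ z.1 (p.coeff (d + 1)) ^ 2) ^ k := by positivity
  rw [mul_zero, zero_mul, sub_zero, sign_mul, sign_pos this, one_mul]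

theorem bdRoot {d : ℕ} (hE : ElimRoot d) (p : R[X]) (hp : p.natDegree ≤ d + 1) (l u : R)
    {A : Set (Ω × ℝ)} {F : Finset R[X]} (hFd : ∀ f ∈ F, f.natDegree ≤ d)
    (hF : ∀ x x', (∀ f ∈ F, SignType.sign (ext1 φ x f) = SignType.sign (ext1 φ x' f)) →
      x ∈ A → x' ∈ A) :
    SA φ {x | φ x (p.coeff (d + 1)) ≠ 0 ∧ ∃ y, φ x l < y ∧ y < φ x u ∧
      (p.map (φ x)).eval y = 0 ∧ (x, y) ∈ A} := by
  classical
  have hA : SA (ext1 φ) A := ⟨F, hF⟩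
  set G := insert p.derivative F with hGdef
  have hdeg : ∀ g ∈ G, g.natDegree ≤ d := by
    intro g hg
    rcases Finset.mem_insert.1 hg with rfl | hg
    · exact (natDegree_derivative_le p).trans (by omega)
    · exact hFd g hg
  have hb1 : SA (ext1 φ) {z | φ z.1 l < z.2} := by
    have := SA.pos (φ := ext1 φ) (X - C l)
    simpa [ext1] using this
  have hb2 : SA (ext1 φ) {z | z.2 < φ z.1 u} := by
    have := SA.pos (φ := ext1 φ) (C u - X)
    simpa [ext1] using this
  have h1 := exRoots hE G hdeg (((hb1.inter hb2).inter (SA.eval_zero p)).inter hA)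
  have hle1 : SA (ext1 (ext1 φ)) {w | φ w.1.1 l ≤ w.1.2} := by
    have := (SA.neg (φ := ext1 (ext1 φ)) (C (X - C l))).compl
    simpa [ext1, Set.compl_def] using this
  have hle2 : SA (ext1 (ext1 φ)) {w | w.2 ≤ φ w.1.1 u} := by
    have := (SA.neg (φ := ext1 (ext1 φ)) (C (C u) - X)).compl
    simpa [ext1, Set.compl_def] using this
  have hopp : SA (ext1 (ext1 φ)) {w | (p.map (φ w.1.1)).eval w.1.2 * (p.map (φ w.1.1)).eval w.2 < 0} := by
    have h := SA.neg (φ := ext1 (ext1 φ)) (C p * p.map C)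
    have h1 : ∀ w, ext1 (ext1 φ) w (C p * p.map C) =
        (p.map (φ w.1.1)).eval w.1.2 * (p.map (φ w.1.1)).eval w.2 := by
      intro w
      rw [map_mul, ext1_apply (φ := ext1 φ) w.1 w.2 (p.map C), Polynomial.map_map, ext1_comp_C,
        ← ext1_apply]
      simp [ext1, eval_map]
    simpa only [h1] using h
  have h2 := keyGap hE G hdeg l u (((hle1.inter hle2).inter hopp).inter hA.mid)
  convert (SA.zero (φ := φ) (p.coeff (d + 1))).compl.inter (h1.union h2) using 1
  ext x
  simp only [Set.mem_ofPred_eq, Set.mem_union, Set.mem_inter_iff, Set.mem_compl_iff]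
  refine and_congr_right fun hlc => ?_
  constructor
  · rintro ⟨y, hl, hu, hy0, hy⟩
    by_cases hr : ∃ g ∈ G, (x, y) ∈ _root_.rt φ g
    · exact Or.inl ⟨y, hr, ⟨⟨hl, hu⟩, hy0⟩, hy⟩
    · right
      obtain ⟨a, b, ha, hb, hla, hay, hyb, hbu, hn⟩ := sa_gap _ (roots_finite φ G x) _ _ y hl hu hr
      have hn' : ∀ t, a < t → t < b → ¬ ∃ g ∈ G, (x, t) ∈ _root_.rt φ g :=
        fun t h1 h2 h3 => hn t h3 ⟨h1, h2⟩
      refine ⟨a, b, ?_, ?_, hay.trans hyb, hn', ⟨⟨hla, hbu⟩, ?_⟩, ?_⟩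
      · exact ha.elim (fun h => Or.inl (Or.inl h)) Or.inr
      · exact hb.elim (fun h => Or.inl (Or.inr h)) Or.inr
      · apply sa_mono_opp _ a b y ⟨hay, hyb⟩ _ hy0
        intro r hr hr0
        rw [derivative_map] at hr0
        refine hn' r hr.1 hr.2 ⟨_, Finset.mem_insert_self _ _, ?_, hr0⟩
        intro h0
        have h0' := congrArg (fun q => q.coeff d) h0
        simp only [coeff_map, coeff_derivative, coeff_zero, map_mul, map_add, map_natCast, map_one] at h0'
        rcases mul_eq_zero.1 h0' with h | h
        · exact hlc h
        · exact absurd h (by positivity)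
      · exact invar_mid (Finset.subset_insert _ F) hF x a b y _ ⟨hay, hyb⟩
          ⟨by linarith, by linarith⟩ hn' hy
  · rintro (⟨y, -, ⟨⟨h1, h2⟩, h3⟩, h4⟩ | ⟨a, b, -, -, hab, hn, ⟨⟨h1, h2⟩, h3⟩, h4⟩)
    · exact ⟨y, h1, h2, h3, h4⟩
    · have hcont := (p.map (φ x)).continuous.continuousOn (s := Set.Icc a b)
      obtain ⟨y, hy, hy0⟩ : ∃ y ∈ Set.Ioo a b, (p.map (φ x)).eval y = 0 := by
        rcases mul_neg_iff.1 h3 with ⟨h5, h6⟩ | ⟨h5, h6⟩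
        · exact intermediate_value_Ioo' hab.le hcont ⟨h6, h5⟩
        · exact intermediate_value_Ioo hab.le hcont ⟨h5, h6⟩
      refine ⟨y, h1.trans_lt hy.1, hy.2.trans_le h2, hy0, ?_⟩
      exact invar_mid (Finset.subset_insert _ F) hF x a b _ y ⟨by linarith, by linarith⟩ hy hn h4

theorem elimRoot_all (d : ℕ) : ElimRoot d := by
  classical
  induction d with
  | zero =>
    intro Ω R _ _ φ p hp A hA
    convert SA.empty (φ := φ)
    ext x
    simp only [Set.mem_ofPred_eq, Set.mem_empty_iff_false, iff_false]
    rintro ⟨y, ⟨h0, h1⟩, -⟩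
    rw [eq_C_of_natDegree_le_zero hp] at h0 h1
    apply h0
    simp only [Polynomial.map_C, eval_C] at h1 ⊢
    rw [h1, C_0]
  | succ d ih =>
    intro Ω R _ _ φ p hp A hA
    set c := p.coeff (d + 1) with hc
    -- degree drops
    have hq : (p - C c * X ^ (d + 1)).natDegree ≤ d := by
      rw [natDegree_le_iff_coeff_eq_zero]
      intro N hN
      rw [coeff_sub, coeff_C_mul, coeff_X_pow]
      split_ifs with h
      · rw [h, hc]; ring
      · rw [coeff_eq_zero_of_natDegree_lt (p := p) (by omega)]; simp
    have h1 := (SA.zero (φ := φ) c).inter (ih Ω R φ _ hq A hA)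
    -- main case
    have h2 : SA φ {x | ∃ y, (x, y) ∈ {z : Ω × ℝ | φ z.1 c ≠ 0 ∧ (p.map (φ z.1)).eval z.2 = 0 ∧ z ∈ A}} := by
      apply SA.evtBdd
      obtain ⟨F, hF⟩ := hA
      choose r hr hrs using redSign φ p d hp
      let F' := F.image r
      let A' : Set (Ω × ℝ) := {z' | ∃ z ∈ A, φ z.1 c ≠ 0 ∧ ext1 φ z p = 0 ∧
        ∀ f ∈ F', SignType.sign (ext1 φ z f) = SignType.sign (ext1 φ z' f)}
      have hA' : ∀ x x', (∀ f ∈ F', SignType.sign (ext1 φ x f) = SignType.sign (ext1 φ x' f)) →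
          x ∈ A' → x' ∈ A' := by
        rintro x x' h ⟨z, hz, h1, h2, h3⟩
        exact ⟨z, hz, h1, h2, fun f hf => (h3 f hf).trans (h f hf)⟩
      have hAA : ∀ z, φ z.1 c ≠ 0 → ext1 φ z p = 0 → (z ∈ A ↔ z ∈ A') := by
        intro z h1 h2
        constructor
        · intro hz
          exact ⟨z, hz, h1, h2, fun _ _ => rfl⟩
        · rintro ⟨z', hz', h1', h2', h3⟩
          refine hF z' z (fun f hf => ?_) hz'
          rw [hrs f z' h1' h2', hrs f z h1 h2]
          exact h3 _ (Finset.mem_image_of_mem _ hf)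
      -- lift to Ω × ℝ
      let F1 := F'.image (Polynomial.map (C : R →+* R[X]))
      have hlift : ∀ (w : (Ω × ℝ) × ℝ) (f : R[X]),
          ext1 (ext1 φ) w (f.map C) = ext1 φ (w.1.1, w.2) f := by
        intro w f
        rw [ext1_apply (φ := φ), ext1_apply (φ := ext1 φ) w.1 w.2, Polynomial.map_map, ext1_comp_C]
      have hF1 : ∀ w w', (∀ f ∈ F1, SignType.sign (ext1 (ext1 φ) w f) =
          SignType.sign (ext1 (ext1 φ) w' f)) →
          w ∈ {w : (Ω × ℝ) × ℝ | (w.1.1, w.2) ∈ A'} → w' ∈ {w : (Ω × ℝ) × ℝ | (w.1.1, w.2) ∈ A'} := by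
        intro w w' h hw
        refine hA' _ _ (fun f hf => ?_) hw
        rw [← hlift, ← hlift]
        exact h _ (Finset.mem_image_of_mem _ hf)
      have h3 := bdRoot (φ := ext1 φ) ih (p.map C) (natDegree_map_le.trans hp) (-X) X
        (deg_lift F' (by
          intro f hf
          obtain ⟨g, hg, rfl⟩ := Finset.mem_image.1 hf
          exact hr g)) hF1
      convert h3 using 1
      ext ⟨x, M⟩
      have e1 : ext1 φ (x, M) ((p.map C).coeff (d + 1)) = φ x c := by
        rw [coeff_map]; simp [ext1, hc]
      simp only [Set.mem_ofPred_eq, e1, Polynomial.map_map, ext1_comp_C]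
      have e2 : ext1 φ (x, M) (-X) = -M := by simp [ext1]
      have e3 : ext1 φ (x, M) X = M := by simp [ext1]
      rw [e2, e3]
      constructor
      · rintro ⟨y, h1, h2, h3, h4, h5⟩
        exact ⟨h3, y, h1, h2, h4, (hAA (x, y) h3 (by rw [ext1_apply]; exact h4)).1 h5⟩
      · rintro ⟨h3, y, h1, h2, h4, h5⟩
        exact ⟨y, h1, h2, h3, h4, (hAA (x, y) h3 (by rw [ext1_apply]; exact h4)).2 h5⟩
    convert h1.union h2 using 1
    ext x
    simp only [Set.mem_ofPred_eq, Set.mem_union, Set.mem_inter_iff, _root_.rt]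
    by_cases h0 : φ x c = 0
    · have : (p - C c * X ^ (d + 1)).map (φ x) = p.map (φ x) := by
        simp [Polynomial.map_sub, h0]
      simp only [this, h0]
      simp
    · have hne : p.map (φ x) ≠ 0 := by
        intro h
        have := congrArg (fun q => q.coeff (d + 1)) h
        rw [coeff_map, coeff_zero] at this
        exact h0 this
      simp [h0, hne]

theorem SA.proj {A : Set (Ω × ℝ)} (hA : SA (ext1 φ) A) : SA φ {x | ∃ y, (x, y) ∈ A} :=
  SA.proj' elimRoot_all hA

end
section
set_option linter.unusedSectionVars false
open MvPolynomial
variable {Ω R : Type} [CommRing R] [Algebra ℝ R] {φ : Ω → R →+* ℝ}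

/-- Adjoin a block of real variables. -/
noncomputable def extN (k : ℕ) (φ : Ω → R →+* ℝ) :
    Ω × (Fin k → ℝ) → MvPolynomial (Fin k) R →+* ℝ := fun z => eval₂Hom (φ z.1) z.2

theorem SA.projN {k : ℕ} : ∀ {Ω R : Type} [CommRing R] [Algebra ℝ R] {φ : Ω → R →+* ℝ}
    {A : Set (Ω × (Fin k → ℝ))}, SA (extN k φ) A → SA φ {x | ∃ z, (x, z) ∈ A} := by
  induction k with
  | zero =>
    intro Ω R _ _ φ A hA
    have h := hA.subst (φ := φ) (fun x => (x, Fin.elim0)) (eval₂Hom (RingHom.id R) Fin.elim0)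
      (fun x f => by
        induction f using MvPolynomial.induction_on with
        | C a => simp [extN]
        | add p q hp hq => rw [map_add, map_add, map_add, hp, hq]
        | mul_X p i _ => exact i.elim0)
    convert h using 1
    ext x
    simp only [Set.mem_ofPred_eq]
    constructor
    · rintro ⟨z, hz⟩
      rwa [Subsingleton.elim z Fin.elim0] at hz
    · intro h
      exact ⟨_, h⟩
  | succ k ih =>
    intro Ω R _ _ φ A hA
    have h := hA.subst (φ := extN k (ext1 φ)) (fun w => (w.1.1, Fin.cons w.1.2 w.2))
      (eval₂Hom ((C : Polynomial R →+* MvPolynomial (Fin k) (Polynomial R)).comp Polynomial.C)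
        (Fin.cons (C Polynomial.X) (fun i => X i) : Fin (k + 1) → MvPolynomial (Fin k) (Polynomial R)))
      (fun w f => by
        induction f using MvPolynomial.induction_on with
        | C a => simp [extN, ext1]
        | add p q hp hq => rw [map_add, map_add, map_add, hp, hq]
        | mul_X p i hp =>
          rw [map_mul, map_mul, map_mul, hp]
          congr 1
          refine Fin.cases ?_ (fun j => ?_) i
          · simp [extN, ext1]
          · simp [extN])
    convert (ih h).proj using 1
    ext x
    simp only [Set.mem_ofPred_eq]
    constructor
    · rintro ⟨z, hz⟩
      exact ⟨z 0, Fin.tail z, by rwa [Fin.cons_self_tail]⟩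
    · rintro ⟨y, z, hz⟩
      exact ⟨_, hz⟩

theorem SA.pull {m : ℕ} {A : Set (Fin m → ℝ)} (h : SA (fun x : Fin m → ℝ => eval x) A)
    (f : Fin m → R) : SA φ {x | (fun i => φ x (f i)) ∈ A} :=
  h.subst (φ := φ) (fun x i => φ x (f i)) (eval₂Hom (algebraMap ℝ R) f) (fun x p => by
    induction p using MvPolynomial.induction_on with
    | C a => simp [map_algR]
    | add p q hp hq => rw [map_add, map_add, map_add, hp, hq]
    | mul_X p i hp => rw [map_mul, map_mul, map_mul, hp]; simp)

theorem IsSemialgebraic.toSA {n : ℕ} {A : Set (Fin n → ℝ)} (h : IsSemialgebraic A) :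
    SA (fun x : Fin n → ℝ => eval x) A := by
  classical
  obtain ⟨N, T, hT, rfl⟩ := h
  choose m P Q hT using hT
  refine ⟨Finset.univ.biUnion fun k => insert (Q k) (Finset.univ.image (P k)), fun x x' hx hA => ?_⟩
  obtain ⟨k, hk⟩ := Set.mem_iUnion.1 hA
  refine Set.mem_iUnion.2 ⟨k, ?_⟩
  rw [hT] at hk ⊢
  refine ⟨fun i => ?_, ?_⟩
  · have := hx (P k i) (by
      rw [Finset.mem_biUnion]
      exact ⟨k, Finset.mem_univ _, Finset.mem_insert_of_mem (Finset.mem_image_of_mem _ (Finset.mem_univ _))⟩)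
    rw [sign_pos (hk.1 i)] at this
    exact sign_eq_one_iff.1 this.symm
  · have := hx (Q k) (by
      rw [Finset.mem_biUnion]
      exact ⟨k, Finset.mem_univ _, Finset.mem_insert_self _ _⟩)
    rw [hk.2, sign_zero] at this
    exact sign_eq_zero_iff.1 this.symm

theorem SA.toIs {n : ℕ} {A : Set (Fin n → ℝ)} (h : SA (fun x : Fin n → ℝ => eval x) A) :
    IsSemialgebraic A := by
  classical
  obtain ⟨F, hF⟩ := h
  let sg : (Fin n → ℝ) → (F → SignType) := fun x f => SignType.sign (eval x f.1)
  let I := {s : F → SignType // ∃ x ∈ A, sg x = s}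
  let e := Fintype.equivFin I
  let e' := Fintype.equivFin F
  refine ⟨Fintype.card I, fun k => {x | sg x = (e.symm k).1}, fun k => ?_, ?_⟩
  · set s := (e.symm k).1
    refine ⟨Fintype.card F, fun i => if s (e'.symm i) = 1 then (e'.symm i).1 else
      if s (e'.symm i) = -1 then - (e'.symm i).1 else 1,
      ∑ f : F, if s f = 0 then f.1 ^ 2 else 0, ?_⟩
    ext x
    simp only [Set.mem_ofPred_eq, map_sum]
    rw [Finset.sum_eq_zero_iff_of_nonneg (by
      intro f _; split_ifs
      · rw [map_pow]; positivity
      · simp)]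
    constructor
    · intro h
      have h' : ∀ f, SignType.sign (eval x f.1) = s f := fun f => congrFun h f
      refine ⟨fun i => ?_, fun f _ => ?_⟩
      · split_ifs with h1 h2
        · rw [← h'] at h1; exact sign_eq_one_iff.1 h1
        · rw [← h'] at h2; rw [map_neg]; have := sign_eq_neg_one_iff.1 h2; linarith
        · simp
      · split_ifs with h1
        · rw [← h'] at h1; rw [map_pow, sign_eq_zero_iff.1 h1]; simp
        · simp
    · rintro ⟨h1, h2⟩
      funext f
      have h3 := h1 (e' f)
      have h4 := h2 f (Finset.mem_univ _)
      rw [Equiv.symm_apply_apply] at h3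
      show SignType.sign (eval x f.1) = s f
      rcases hs : s f with _ | _ | _
      · have hs' : s f = 0 := hs
        rw [if_pos hs', map_pow] at h4
        rw [pow_eq_zero_iff two_ne_zero] at h4
        rw [h4]; simp
      · have hs' : s f = -1 := hs
        rw [hs', if_neg (by decide), if_pos rfl, map_neg] at h3
        exact sign_neg (by linarith)
      · have hs' : s f = 1 := hs
        rw [hs', if_pos rfl] at h3
        exact sign_pos h3
  · ext x
    simp only [Set.mem_iUnion, Set.mem_ofPred_eq]
    constructor
    · intro hx
      refine ⟨e ⟨sg x, x, hx, rfl⟩, ?_⟩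
      rw [Equiv.symm_apply_apply]
    · rintro ⟨k, hk⟩
      obtain ⟨x', hx', h'⟩ := (e.symm k).2
      refine hF x' x (fun f hf => ?_) hx'
      exact congrFun (h'.trans hk.symm) ⟨f, hf⟩

theorem SA.nuLt {n : ℕ} {ν : (Fin n → ℝ) → ℝ} (hν : IsSemialgebraicFn ν) (u v : Fin n → R) :
    SA φ {o | ν (fun i => φ o (u i)) < ν (fun i => φ o (v i))} := by
  have hΓ := IsSemialgebraic.toSA hν
  have h1 := SA.pull (φ := ext1 (ext1 φ)) hΓ
    (Fin.snoc (fun i => Polynomial.C (Polynomial.C (u i))) (Polynomial.C Polynomial.X) :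
      Fin (n + 1) → Polynomial (Polynomial R))
  have h2 := SA.pull (φ := ext1 (ext1 φ)) hΓ
    (Fin.snoc (fun i => Polynomial.C (Polynomial.C (v i))) Polynomial.X :
      Fin (n + 1) → Polynomial (Polynomial R))
  have hlt : SA (ext1 (ext1 φ)) {w : (Ω × ℝ) × ℝ | w.1.2 < w.2} := by
    have := SA.pos (φ := ext1 (ext1 φ)) (Polynomial.X - Polynomial.C Polynomial.X)
    simpa [ext1] using this
  have e1 : ∀ w : (Ω × ℝ) × ℝ, (fun i => ext1 (ext1 φ) w
      ((Fin.snoc (fun i => Polynomial.C (Polynomial.C (u i))) (Polynomial.C Polynomial.X) :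
      Fin (n + 1) → Polynomial (Polynomial R)) i)) =
      (Fin.snoc (fun i => φ w.1.1 (u i)) w.1.2 : Fin (n + 1) → ℝ) := by
    intro w; funext i
    refine Fin.lastCases ?_ (fun j => ?_) i <;> simp [ext1]
  have e2 : ∀ w : (Ω × ℝ) × ℝ, (fun i => ext1 (ext1 φ) w
      ((Fin.snoc (fun i => Polynomial.C (Polynomial.C (v i))) Polynomial.X :
      Fin (n + 1) → Polynomial (Polynomial R)) i)) =
      (Fin.snoc (fun i => φ w.1.1 (v i)) w.2 : Fin (n + 1) → ℝ) := by
    intro w; funext i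
    refine Fin.lastCases ?_ (fun j => ?_) i <;> simp [ext1]
  simp only [e1] at h1
  simp only [e2] at h2
  have h3 := ((h1.inter h2).inter hlt).proj.proj
  convert h3 using 1
  ext o
  simp only [Set.mem_ofPred_eq, Set.mem_inter_iff]
  constructor
  · intro h
    exact ⟨_, _, ⟨⟨_, rfl⟩, ⟨_, rfl⟩⟩, h⟩
  · rintro ⟨s, t, ⟨⟨x, hx⟩, ⟨y, hy⟩⟩, h⟩
    obtain ⟨rfl, rfl⟩ := Fin.snoc_inj.1 hx
    obtain ⟨rfl, rfl⟩ := Fin.snoc_inj.1 hy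
    exact h

theorem SA.best {n : ℕ} {ν : (Fin n → ℝ) → ℝ} (hν : IsSemialgebraicFn ν)
    {K : Set (Fin n → ℝ)} (hK : IsSemialgebraic K) (x z : Fin n → R) :
    SA φ {o | (fun i => φ o (z i)) ∈ K ∧ ∀ w ∈ K,
      ν ((fun i => φ o (x i)) - (fun i => φ o (z i))) ≤ ν ((fun i => φ o (x i)) - w)} := by
  have h1 := SA.pull (φ := φ) hK.toSA z
  have h2 := SA.pull (φ := extN n φ) hK.toSA (fun i => X i)
  have h3 := SA.nuLt (φ := extN n φ) hν (fun i => C (x i) - X i) (fun i => C (x i) - C (z i))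
  have h4 := h1.inter (h2.inter h3).projN.compl
  convert h4 using 1
  ext o
  simp only [Set.mem_ofPred_eq, Set.mem_inter_iff, Set.mem_compl_iff]
  refine and_congr_right fun _ => ?_
  have e1 : ∀ w : Fin n → ℝ, (fun i => extN n φ (o, w) (X i)) = w := by
    intro w; funext i; simp [extN]
  have e2 : ∀ w : Fin n → ℝ, (fun i => extN n φ (o, w) (C (x i) - X i)) =
      (fun i => φ o (x i)) - w := by
    intro w; funext i; simp [extN]
  have e3 : ∀ w : Fin n → ℝ, (fun i => extN n φ (o, w) (C (x i) - C (z i))) =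
      (fun i => φ o (x i)) - (fun i => φ o (z i)) := by
    intro w; funext i; simp [extN]
  simp only [e1, e2, e3]
  push Not
  rfl

theorem semialg_nonunique {n : ℕ} {ν : (Fin n → ℝ) → ℝ} (hν : IsSemialgebraicFn ν)
    {K : Set (Fin n → ℝ)} (hK : IsSemialgebraic K) :
    IsSemialgebraic {x | ∃ z w, (z ∈ K ∧ ∀ v ∈ K, ν (x - z) ≤ ν (x - v)) ∧
      (w ∈ K ∧ ∀ v ∈ K, ν (x - w) ≤ ν (x - v)) ∧ z ≠ w} := by
  apply SA.toIs
  set φ0 : (Fin n → ℝ) → MvPolynomial (Fin n) ℝ →+* ℝ := fun x => eval x with hφ0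
  have h1 := SA.best (φ := extN n (extN n φ0)) hν hK (fun i => C (C (X i))) (fun i => C (X i))
  have h2 := SA.best (φ := extN n (extN n φ0)) hν hK (fun i => C (C (X i))) (fun i => X i)
  have h3 := SA.biUnion (φ := extN n (extN n φ0)) Finset.univ
    (A := fun i : Fin n => {o | extN n (extN n φ0) o (C (X i) - X i) = 0}ᶜ)
    (fun i _ => (SA.zero _).compl)
  have h4 := (h1.inter (h2.inter h3)).projN.projN
  convert h4 using 1
  ext x
  simp only [Set.mem_ofPred_eq, Set.mem_inter_iff, Set.mem_compl_iff]
  have e0 : ∀ z w, (fun i => extN n (extN n φ0) ((x, z), w) (C (C (X i)))) = x := by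
    intro z w; funext i; simp [extN, hφ0]
  have e1 : ∀ z w, (fun i => extN n (extN n φ0) ((x, z), w) (C (X i))) = z := by
    intro z w; funext i; simp [extN]
  have e2 : ∀ z w, (fun i => extN n (extN n φ0) ((x, z), w) (X i)) = w := by
    intro z w; funext i; simp [extN]
  have e3 : ∀ z w i, extN n (extN n φ0) ((x, z), w) (C (X i) - X i) = z i - w i := by
    intro z w i; simp [extN]
  simp only [e0, e1, e2, e3, sub_eq_zero, Finset.mem_univ, true_and]
  simp only [Ne, funext_iff, not_forall]

theorem semialg_empty_interior {n : ℕ} {S : Set (Fin n → ℝ)} (hS : IsSemialgebraic S)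
    (hi : interior S = ∅) : interior (closure S) = ∅ ∧
    ∃ Q : MvPolynomial (Fin n) ℝ, Q ≠ 0 ∧ ∀ x ∈ S, eval x Q = 0 := by
  classical
  obtain ⟨N, T, hT, rfl⟩ := hS
  choose m P Q hT using hT
  have hQ : ∃ q : MvPolynomial (Fin n) ℝ, q ≠ 0 ∧ ∀ x ∈ ⋃ k, T k, eval x q = 0 := by
    refine ⟨∏ k, if Q k = 0 then 1 else Q k, ?_, ?_⟩
    · rw [Finset.prod_ne_zero_iff]
      intro k _
      split_ifs with h
      · exact one_ne_zero
      · exact h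
    · intro x hx
      obtain ⟨k, hk⟩ := Set.mem_iUnion.1 hx
      rw [map_prod]
      apply Finset.prod_eq_zero (Finset.mem_univ k)
      split_ifs with h
      · exfalso
        have hopen : IsOpen (T k) := by
          rw [hT, h]
          simp only [map_zero, and_true]
          have : {x : Fin n → ℝ | ∀ i, 0 < eval x (P k i)} = ⋂ i, {x | 0 < eval x (P k i)} := by
            ext; simp
          rw [this]
          exact isOpen_iInter_of_finite fun i =>
            isOpen_lt continuous_const (MvPolynomial.continuous_eval _)
        have : x ∈ interior (⋃ k, T k) := interior_maximal (Set.subset_iUnion T k) hopen hk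
        rw [hi] at this
        exact this
      · rw [hT] at hk
        exact hk.2
  refine ⟨?_, hQ⟩
  obtain ⟨q, hq0, hq⟩ := hQ
  have hcl : closure (⋃ k, T k) ⊆ {x | eval x q = 0} :=
    closure_minimal hq (isClosed_eq (MvPolynomial.continuous_eval _) continuous_const)
  rw [Set.eq_empty_iff_forall_notMem]
  intro x hx
  apply hq0
  have hx' := interior_mono hcl hx
  rw [mem_interior_iff_mem_nhds, Metric.mem_nhds_iff] at hx'
  obtain ⟨ε, hε, hb⟩ := hx'
  apply MvPolynomial.funext_set (fun i => Set.Ioo (x i - ε) (x i + ε))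
    (fun i => Set.Ioo_infinite (by linarith))
  intro y hy
  rw [map_zero]
  apply hb
  rw [Metric.mem_ball, dist_pi_lt_iff hε]
  intro i
  have := hy i (Set.mem_univ _)
  rw [Real.dist_eq, abs_lt]
  exact ⟨by linarith [this.1], by linarith [this.2]⟩

end
section
open Filter Topology

theorem nu_upper {n : ℕ} {ν : (Fin n → ℝ) → ℝ}
    (hν_eq : ∀ x, ν x = 0 ↔ x = 0)
    (hν_smul : ∀ (c : ℝ) (x), ν (c • x) = |c| * ν x)
    (hν_add : ∀ x y, ν (x + y) ≤ ν x + ν y) : Continuous ν := by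
  have h0 : ν 0 = 0 := (hν_eq 0).2 rfl
  have hneg : ∀ x, ν (-x) = ν x := fun x => by
    have := hν_smul (-1) x
    simpa using this
  have hnn : ∀ x, 0 ≤ ν x := fun x => by
    have := hν_add x (-x)
    rw [hneg, add_neg_cancel, h0] at this
    linarith
  let K := ∑ i : Fin n, ν (Pi.single i 1)
  have hK : ∀ x, ν x ≤ K * ‖x‖ := by
    intro x
    have hsum : ∀ (s : Finset (Fin n)) (f : Fin n → Fin n → ℝ), ν (∑ i ∈ s, f i) ≤ ∑ i ∈ s, ν (f i) := by
      classical
      intro s f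
      induction s using Finset.induction_on with
      | empty => simp [h0]
      | insert a s ha ih =>
        rw [Finset.sum_insert ha, Finset.sum_insert ha]
        exact (hν_add _ _).trans (by linarith)
    have hx : x = ∑ i, x i • (Pi.single i 1 : Fin n → ℝ) := pi_eq_sum_univ' x
    calc ν x = ν (∑ i, x i • (Pi.single i 1 : Fin n → ℝ)) := by rw [← hx]
      _ ≤ ∑ i, ν (x i • (Pi.single i 1 : Fin n → ℝ)) := hsum _ _
      _ ≤ ∑ i, ν (Pi.single i 1) * ‖x‖ := by
        apply Finset.sum_le_sum
        intro i _
        rw [hν_smul, mul_comm]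
        exact mul_le_mul_of_nonneg_left (norm_le_pi_norm x i) (hnn _)
      _ = K * ‖x‖ := by rw [Finset.sum_mul]
  have hKn : 0 ≤ K := Finset.sum_nonneg fun i _ => hnn _
  have hl : LipschitzWith ⟨K, hKn⟩ ν := by
    apply LipschitzWith.of_le_add_mul
    intro x y
    have h1 := hν_add y (x - y)
    rw [add_sub_cancel] at h1
    have h2 := hK (x - y)
    rw [dist_eq_norm]
    change ν x ≤ ν y + K * ‖x - y‖
    linarith
  exact hl.continuous

theorem nu_lower {n : ℕ} {ν : (Fin n → ℝ) → ℝ}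
    (hν_eq : ∀ x, ν x = 0 ↔ x = 0)
    (hν_smul : ∀ (c : ℝ) (x), ν (c • x) = |c| * ν x)
    (hnn : ∀ x, 0 ≤ ν x) (hc : Continuous ν) : ∃ c > 0, ∀ x, c * ‖x‖ ≤ ν x := by
  by_cases hne : (Metric.sphere (0 : Fin n → ℝ) 1).Nonempty
  · obtain ⟨x0, hx0, hmin⟩ := (isCompact_sphere (0 : Fin n → ℝ) 1).exists_isMinOn hne hc.continuousOn
    have hx0' : x0 ≠ 0 := by
      rintro rfl; simp at hx0
    refine ⟨ν x0, lt_of_le_of_ne (hnn _) (fun h => hx0' ((hν_eq _).1 h.symm)), fun x => ?_⟩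
    rcases eq_or_ne x 0 with rfl | hx
    · simpa using hnn 0
    have hxn : 0 < ‖x‖ := norm_pos_iff.2 hx
    have h1 : ‖x‖⁻¹ • x ∈ Metric.sphere (0 : Fin n → ℝ) 1 := by
      rw [mem_sphere_zero_iff_norm, norm_smul, norm_inv, norm_norm, inv_mul_cancel₀ hxn.ne']
    have h2 : ν x0 ≤ ν (‖x‖⁻¹ • x) := hmin h1
    rw [hν_smul, abs_of_pos (inv_pos.2 hxn)] at h2
    calc ν x0 * ‖x‖ ≤ (‖x‖⁻¹ * ν x) * ‖x‖ := by gcongr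
      _ = ν x := by field_simp
  · refine ⟨1, one_pos, fun x => ?_⟩
    rcases eq_or_ne x 0 with rfl | hx
    · simpa using hnn 0
    have hxn : 0 < ‖x‖ := norm_pos_iff.2 hx
    exfalso
    apply hne
    refine ⟨‖x‖⁻¹ • x, ?_⟩
    rw [mem_sphere_zero_iff_norm, norm_smul, norm_inv, norm_norm, inv_mul_cancel₀ hxn.ne']

theorem nu_exists_best {n : ℕ} {ν : (Fin n → ℝ) → ℝ} (hc : Continuous ν)
    {c : ℝ} (hc0 : 0 < c) (hlow : ∀ x, c * ‖x‖ ≤ ν x) {K : Set (Fin n → ℝ)} (hK : IsClosed K)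
    (hne : K.Nonempty) (x : Fin n → ℝ) : ∃ z ∈ K, ∀ v ∈ K, ν (x - z) ≤ ν (x - v) := by
  obtain ⟨y0, hy0⟩ := hne
  have hmem : ∀ v, ν (x - v) ≤ ν (x - y0) → v ∈ Metric.closedBall x (ν (x - y0) / c) := by
    intro v hv
    rw [Metric.mem_closedBall, dist_comm, dist_eq_norm, le_div_iff₀ hc0]
    linarith [hlow (x - v)]
  have hcomp : IsCompact (K ∩ Metric.closedBall x (ν (x - y0) / c)) :=
    (isCompact_closedBall _ _).inter_left hK
  have hcont : Continuous fun v => ν (x - v) := hc.comp (continuous_const.sub continuous_id)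
  obtain ⟨z, hz, hmin⟩ := hcomp.exists_isMinOn ⟨y0, hy0, hmem y0 le_rfl⟩ hcont.continuousOn
  refine ⟨z, hz.1, fun v hv => ?_⟩
  by_cases h : ν (x - v) ≤ ν (x - y0)
  · exact hmin ⟨hv, hmem v h⟩
  · exact le_trans (hmin ⟨hy0, hmem y0 le_rfl⟩) (not_le.1 h).le

theorem nu_strict {n : ℕ} {ν : (Fin n → ℝ) → ℝ}
    (hν_eq : ∀ x, ν x = 0 ↔ x = 0)
    (hν_smul : ∀ (c : ℝ) (x), ν (c • x) = |c| * ν x)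
    (hν_add : ∀ x y, ν (x + y) ≤ ν x + ν y)
    (hnn : ∀ x, 0 ≤ ν x) {c : ℝ} (hc0 : 0 < c) (hlow : ∀ x, c * ‖x‖ ≤ ν x)
    (hν_diff : ∀ x : Fin n → ℝ, x ≠ 0 → DifferentiableAt ℝ ν x)
    (hν_star_diff : ∀ x : Fin n → ℝ, x ≠ 0 → DifferentiableAt ℝ (dualNu ν) x)
    (a b : Fin n → ℝ) (ha : a ≠ 0) (hb : b ≠ 0) (hab : ν (a + b) = ν a + ν b) :
    (ν a)⁻¹ • a = (ν b)⁻¹ • b := by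
  have hpos : ∀ x, x ≠ 0 → 0 < ν x := fun x hx =>
    lt_of_le_of_ne (hnn _) (fun h => hx ((hν_eq _).1 h.symm))
  have hv0 : a + b ≠ 0 := by
    intro h
    rw [h, (hν_eq 0).2 rfl] at hab
    linarith [hpos a ha, hpos b hb]
  set v := a + b with hv
  obtain ⟨g, hg⟩ := hν_diff v hv0
  have hslope : ∀ h : Fin n → ℝ, Tendsto (fun t : ℝ => t⁻¹ * (ν (v + t • h) - ν v)) (𝓝[>] 0) (𝓝 (g h)) := by
    intro h
    have h1 : HasDerivAt (fun t : ℝ => ν (v + t • h)) (g h) 0 := by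
      have h2 : HasDerivAt (fun t : ℝ => v + t • h) h 0 := by
        simpa using ((hasDerivAt_id (0 : ℝ)).smul_const h).const_add v
      have h3 : HasFDerivAt ν g (v + (0 : ℝ) • h) := by simpa using hg
      exact h3.comp_hasDerivAt 0 h2
    have := h1.tendsto_slope_zero_right
    simpa using this
  have hgle : ∀ h, g h ≤ ν h := by
    intro h
    apply le_of_tendsto (hslope h)
    filter_upwards [self_mem_nhdsWithin] with t ht
    have ht' : (0 : ℝ) < t := ht
    have h1 := hν_add v (t • h)
    rw [hν_smul, abs_of_pos ht'] at h1
    rw [inv_mul_le_iff₀ ht']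
    linarith
  have hgv : g v = ν v := by
    apply tendsto_nhds_unique (hslope v)
    apply tendsto_const_nhds.congr'
    filter_upwards [self_mem_nhdsWithin] with t ht
    have ht' : (0 : ℝ) < t := ht
    have : v + t • v = (1 + t) • v := by rw [add_smul, one_smul]
    rw [this, hν_smul, abs_of_pos (by linarith)]
    field_simp
    ring
  have hga : g a = ν a := by
    have h1 : g v = g a + g b := by rw [hv, map_add]
    linarith [hgle a, hgle b]
  have hgb : g b = ν b := by
    have h1 : g v = g a + g b := by rw [hv, map_add]
    linarith [hgle a, hgle b]
  let q : Fin n → ℝ := fun i => g (Pi.single i 1)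
  have hgq : ∀ y, ∑ i, y i * q i = g y := by
    intro y
    conv_rhs => rw [pi_eq_sum_univ' y]
    rw [map_sum]
    simp [q]
  have hbdd : ∀ r : Fin n → ℝ, BddAbove ((fun y => ∑ i, y i * r i) '' {y | ν y ≤ 1}) := by
    intro r
    refine ⟨∑ i, c⁻¹ * |r i|, ?_⟩
    rintro _ ⟨y, hy, rfl⟩
    apply Finset.sum_le_sum
    intro i _
    refine (le_abs_self _).trans ?_
    rw [abs_mul]
    apply mul_le_mul_of_nonneg_right _ (abs_nonneg _)
    have h1 : |y i| ≤ ‖y‖ := norm_le_pi_norm y i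
    have h2 := hlow y
    have h3 : ν y ≤ 1 := hy
    rw [← one_div, le_div_iff₀ hc0]
    nlinarith
  have hdle : ∀ r u : Fin n → ℝ, ν u ≤ 1 → ∑ i, u i * r i ≤ dualNu ν r := fun r u hu =>
    le_csSup (hbdd r) ⟨u, hu, rfl⟩
  have hdq : dualNu ν q ≤ 1 := by
    apply csSup_le
    · exact ⟨_, ⟨0, by simp [(hν_eq 0).2 rfl], rfl⟩⟩
    · rintro _ ⟨y, hy, rfl⟩
      simp only [hgq]
      exact (hgle y).trans hy
  have hq0 : q ≠ 0 := by
    intro h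
    have := hgq a
    rw [h, hga] at this
    simp at this
    exact (hpos a ha).ne this
  obtain ⟨D, hD⟩ := hν_star_diff q hq0
  have main : ∀ u, u ≠ 0 → g u = ν u → ∀ i, D (Pi.single i 1) = ((ν u)⁻¹ • u) i := by
    intro u hu hgu i
    have hup := hpos u hu
    set w := (ν u)⁻¹ • u with hw
    have hw1 : ν w = 1 := by
      rw [hw, hν_smul, abs_of_pos (inv_pos.2 hup), inv_mul_cancel₀ hup.ne']
    have hgw : ∑ i, w i * q i = 1 := by
      rw [hgq, hw, map_smul, hgu, smul_eq_mul, inv_mul_cancel₀ hup.ne']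
    let Lw : (Fin n → ℝ) →L[ℝ] ℝ := ∑ i, w i • ContinuousLinearMap.proj (R := ℝ) (φ := fun _ : Fin n => ℝ) i
    have hLw : ∀ r, Lw r = ∑ i, w i * r i := by
      intro r; simp [Lw]
    have hmin : IsLocalMin (fun r => dualNu ν r - Lw r) q := by
      apply Filter.Eventually.of_forall
      intro r
      have h1 := hdle r w hw1.le
      show dualNu ν q - Lw q ≤ dualNu ν r - Lw r
      rw [hLw, hLw, hgw]
      linarith
    have hz := hmin.hasFDerivAt_eq_zero (hD.sub Lw.hasFDerivAt)
    have : D = Lw := sub_eq_zero.1 hz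
    rw [this, hLw]
    simp [Pi.single_apply]
  funext i
  rw [← main a ha hga i, ← main b hb hgb i]

end

/-- Let `C ⊆ ℝⁿ` be a nonempty closed semi-algebraic set and `ν` a semi-algebraic norm
such that `ν` and its dual norm `ν*` are differentiable away from the origin.  Then the
set `S(C)` of points without a unique best `ν`-approximation in `C` is a nowhere dense
semi-algebraic set; in particular it is contained in the zero set of a nonzero polynomial. -/
theorem stmt10 {n : ℕ} (C : Set (Fin n → ℝ))
    (hCne : C.Nonempty) (hCcl : IsClosed C) (hCsa : IsSemialgebraic C)
    (ν : (Fin n → ℝ) → ℝ)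
    (hν_eq : ∀ x, ν x = 0 ↔ x = 0)
    (hν_smul : ∀ (c : ℝ) (x), ν (c • x) = |c| * ν x)
    (hν_add : ∀ x y, ν (x + y) ≤ ν x + ν y)
    (hν_sa : IsSemialgebraicFn ν)
    (hν_diff : ∀ x : Fin n → ℝ, x ≠ 0 → DifferentiableAt ℝ ν x)
    (hν_star_diff : ∀ x : Fin n → ℝ, x ≠ 0 → DifferentiableAt ℝ (dualNu ν) x)
    (S : Set (Fin n → ℝ))
    (hS : S = {x | ¬ ∃! z, z ∈ C ∧ ν (x - z) = distNu ν C x}) :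
    IsSemialgebraic S ∧ interior (closure S) = ∅ ∧
    ∃ Q : MvPolynomial (Fin n) ℝ, Q ≠ 0 ∧ ∀ x ∈ S, MvPolynomial.eval x Q = 0 := by
  have hcont := nu_upper hν_eq hν_smul hν_add
  have hnn : ∀ x, 0 ≤ ν x := fun x => by
    have hneg : ν (-x) = ν x := by simpa using hν_smul (-1) x
    have := hν_add x (-x)
    rw [hneg, add_neg_cancel, (hν_eq 0).2 rfl] at this
    linarith
  obtain ⟨c, hc0, hlow⟩ := nu_lower hν_eq hν_smul hnn hcont
  have hbest := nu_exists_best hcont hc0 hlow hCcl hCne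
  have hdist : ∀ x z, (z ∈ C ∧ ν (x - z) = distNu ν C x) ↔
      (z ∈ C ∧ ∀ v ∈ C, ν (x - z) ≤ ν (x - v)) := by
    intro x z
    refine and_congr_right fun hz => ?_
    obtain ⟨z0, hz0, hmin⟩ := hbest x
    have hl : IsLeast ((fun y => ν (x - y)) '' C) (ν (x - z0)) := by
      refine ⟨⟨z0, hz0, rfl⟩, ?_⟩
      rintro _ ⟨v, hv, rfl⟩
      exact hmin v hv
    have hd : distNu ν C x = ν (x - z0) := hl.csInf_eq
    rw [hd]
    constructor
    · intro h v hv
      rw [h]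
      exact hmin v hv
    · intro h
      exact le_antisymm (h z0 hz0) (hmin z hz)
  have hS' : S = {x | ∃ z w, (z ∈ C ∧ ∀ v ∈ C, ν (x - z) ≤ ν (x - v)) ∧
      (w ∈ C ∧ ∀ v ∈ C, ν (x - w) ≤ ν (x - v)) ∧ z ≠ w} := by
    rw [hS]
    ext x
    simp only [Set.mem_ofPred_eq, hdist]
    constructor
    · intro h
      obtain ⟨z, hz, hz'⟩ := hbest x
      by_contra hcon
      apply h
      refine ⟨z, ⟨hz, hz'⟩, fun w hw => ?_⟩
      by_contra hne
      exact hcon ⟨w, z, hw, ⟨hz, hz'⟩, hne⟩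
    · rintro ⟨z, w, hz, hw, hne⟩ h
      exact hne (h.unique hz hw)
  have hsa : IsSemialgebraic S := by
    rw [hS']
    exact semialg_nonunique hν_sa hCsa
  refine ⟨hsa, semialg_empty_interior hsa ?_⟩
  rw [Set.eq_empty_iff_forall_notMem]
  intro x hx
  obtain ⟨y, hy, hymin⟩ := hbest x
  -- points slightly closer to `y` have `y` as unique best approximation
  have huniq : ∀ t : ℝ, 0 < t → t < 1 → ∀ z ∈ C,
      (∀ v ∈ C, ν (x - t • (x - y) - z) ≤ ν (x - t • (x - y) - v)) → z = y := by
    intro t ht0 ht1 z hz hzmin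
    have e1 : x - t • (x - y) - y = (1 - t) • (x - y) := by
      rw [sub_smul, one_smul]; abel
    have h1 := hzmin y hy
    rw [e1, hν_smul, abs_of_pos (by linarith : (0:ℝ) < 1 - t)] at h1
    have h2 := hymin z hz
    have e2 : t • (x - y) + (x - t • (x - y) - z) = x - z := by abel
    have h3 := hν_add (t • (x - y)) (x - t • (x - y) - z)
    rw [e2, hν_smul, abs_of_pos ht0] at h3
    have h4 : ν (x - t • (x - y) - z) = (1 - t) * ν (x - y) := by linarith
    rcases eq_or_ne (x - y) 0 with h0 | h0
    · rw [h0, smul_zero, sub_zero, (hν_eq 0).2 rfl, mul_zero, hν_eq] at h4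
      rw [← sub_eq_zero.1 h4, sub_eq_zero.1 h0]
    · have hD : 0 < ν (x - y) := lt_of_le_of_ne (hnn _) (fun h => h0 ((hν_eq _).1 h.symm))
      have hbne : x - t • (x - y) - z ≠ 0 := by
        intro h
        rw [h, (hν_eq 0).2 rfl] at h4
        have : 0 < (1 - t) * ν (x - y) := mul_pos (by linarith) hD
        linarith
      have h5 := nu_strict hν_eq hν_smul hν_add hnn hc0 hlow hν_diff hν_star_diff
        (t • (x - y)) (x - t • (x - y) - z) (smul_ne_zero ht0.ne' h0) hbne (by
          rw [e2, hν_smul, abs_of_pos ht0]; linarith)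
      rw [h4, hν_smul, abs_of_pos ht0, smul_smul] at h5
      have h6 := congrArg (fun w => ((1 - t) * ν (x - y)) • w) h5
      have hne : (1 - t) * ν (x - y) ≠ 0 := (mul_pos (by linarith) hD).ne'
      simp only [smul_smul] at h6
      rw [mul_inv_cancel₀ hne, one_smul] at h6
      have h7 : (1 - t) * ν (x - y) * ((t * ν (x - y))⁻¹ * t) = 1 - t := by
        field_simp
      rw [h7, ← e1] at h6
      exact (sub_right_injective h6).symm
  have htend : Filter.Tendsto (fun t : ℝ => x - t • (x - y)) (nhdsWithin 0 (Set.Ioi 0)) (nhds x) := by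
    have : Continuous (fun t : ℝ => x - t • (x - y)) := by fun_prop
    have h := this.tendsto 0
    simp only [zero_smul, sub_zero] at h
    exact h.mono_left nhdsWithin_le_nhds
  have hev := htend.eventually (mem_interior_iff_mem_nhds.1 hx)
  have hlt : ∀ᶠ t : ℝ in nhdsWithin 0 (Set.Ioi 0), t < 1 :=
    nhdsWithin_le_nhds (gt_mem_nhds one_pos)
  obtain ⟨t, ⟨htS, ht1⟩, ht0⟩ := ((hev.and hlt).and self_mem_nhdsWithin).exists
  change x - t • (x - y) ∈ S at htS
  rw [hS'] at htS
  obtain ⟨z, w, hz, hw, hne⟩ := htS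
  exact hne ((huniq t ht0 ht1 z hz.1 hz.2).trans (huniq t ht0 ht1 w hw.1 hw.2).symm)
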